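/- Let (M,φ,ξ,η,g) be a contact metric (κ,μ)-space which is not K-contact, and let λ = √(1−κ). Then the Pang invariants of the Legendrian foliations F_λ and F_{−λ} are given by Π_{F_λ} = (((λ+1)² − κ − μλ)/λ) · g restricted to TF_λ × TF_λ, and Π_{F_{−λ}} = ((−(λ−1)² + κ − μλ)/λ) · g restricted to TF_{−λ} × TF_{−λ}. -/

import Mathlib

/-!
The argument is the classical one, written so that it never needs `g` to be non-degenerate: an
identity between vector fields is only asserted after pairing both sides with an arbitrary field.

* `dη(·, ξ) = 0` and `d² η = 0` give `𝓛_ξ dη = 0`, hence `(𝓛_ξ g)(u, φ w) = -2 g(u, h w)`. Combined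
  with the Koszul formula this yields `∇_u ξ = -φ u + h φ u` (`g_nabla_xi`).
* Let `h x = ε x` with `η x = 0`, and let `w = [x, ξ] = a + b` with `a` and `b` in the `ε`- and
  `(-ε)`-eigendistributions. Then `∇_x ξ = -(1+ε) φ x` and `∇_ξ φ x = (1+ε) x - φ w`, so that
  `R(x, ξ) ξ = (1+ε)² x - 2 ε φ b`. The nullity condition says `R(x, ξ) ξ = (κ + μ ε) x`. Since
  `Π(x, x') = 2 g(x', φ w) = 2 g(x', φ b)`, this gives
  `ε Π(x, x') = ((1+ε)² - κ - μ ε) g(x, x')` (`eps_mul_pang`).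

The two formulas are the cases `ε = ± λ`. Division by `λ` is legitimate because `λ = 0` would make
`h` vanish on both eigendistributions and on `ξ`, so the space would be K-contact.
-/

/-!  An algebraic (Koszul / Lie–Rinehart style) model of an (almost) contact
metric manifold `(M, φ, ξ, η, g)`.  Here `C` plays the role of the commutative
`ℝ`-algebra `C^∞(M)` of smooth functions on the manifold and `V` plays the role
of the `C`-module `Γ(TM)` of smooth vector fields, equipped with the Lie
bracket `bracket`, the derivation `act` of vector fields on functions, the
Riemannian metric `g`, the structure tensor `φ`, the `1`-form `η` and the Reeb
vector field `ξ`.  Real constants are regarded as functions via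
`algebraMap ℝ C`. -/

noncomputable section

universe u v

structure AlmostContactMetric (C : Type u) (V : Type v)
    [CommRing C] [Algebra ℝ C] [AddCommGroup V] [Module C V] where
  /-- the derivative of a function along a vector field -/
  act : V → C → C
  /-- the Lie bracket of vector fields -/
  bracket : V → V → V
  /-- the Riemannian metric -/
  g : V → V → C
  /-- the structure `(1,1)`-tensor `φ` -/
  phi : V → V
  /-- the `1`-form `η` -/
  eta : V → C
  /-- the Reeb vector field `ξ` -/
  xi : V
  act_add : ∀ u : V, ∀ f₁ f₂ : C, act u (f₁ + f₂) = act u f₁ + act u f₂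
  act_mul : ∀ u : V, ∀ f₁ f₂ : C, act u (f₁ * f₂) = act u f₁ * f₂ + f₁ * act u f₂
  act_algebraMap : ∀ u : V, ∀ r : ℝ, act u (algebraMap ℝ C r) = 0
  act_add_left : ∀ u v : V, ∀ f : C, act (u + v) f = act u f + act v f
  act_smul_left : ∀ f' : C, ∀ u : V, ∀ f : C, act (f' • u) f = f' * act u f
  bracket_add_left : ∀ u v w : V, bracket (u + v) w = bracket u w + bracket v w
  bracket_antisymm : ∀ v w : V, bracket v w = - bracket w v
  bracket_jacobi : ∀ u v w : V,
    bracket u (bracket v w) + bracket v (bracket w u) + bracket w (bracket u v) = 0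
  bracket_leibniz : ∀ v : V, ∀ f : C, ∀ w : V,
    bracket v (f • w) = act v f • w + f • bracket v w
  bracket_act : ∀ v w : V, ∀ f : C,
    act (bracket v w) f = act v (act w f) - act w (act v f)
  g_add_left : ∀ u v w : V, g (u + v) w = g u w + g v w
  g_smul_left : ∀ f : C, ∀ v w : V, g (f • v) w = f * g v w
  g_symm : ∀ v w : V, g v w = g w v
  phi_add : ∀ v w : V, phi (v + w) = phi v + phi w
  phi_smul : ∀ f : C, ∀ v : V, phi (f • v) = f • phi v
  eta_add : ∀ v w : V, eta (v + w) = eta v + eta w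
  eta_smul : ∀ f : C, ∀ v : V, eta (f • v) = f * eta v
  eta_xi : eta xi = 1
  phi_sq : ∀ v : V, phi (phi v) = - v + eta v • xi
  g_compat : ∀ v w : V, g (phi v) (phi w) = g v w - eta v * eta w
  eta_eq_g_xi : ∀ v : V, eta v = g v xi

namespace AlmostContactMetric

variable {C : Type u} {V : Type v} [CommRing C] [Algebra ℝ C]
  [AddCommGroup V] [Module C V]

/-- The fundamental 2-form `Φ(v,w) = g(v, φ w)`. -/
def Phi2 (S : AlmostContactMetric C V) (v w : V) : C := S.g v (S.phi w)

/-- The exterior derivative of `η`, with the convention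
`dη(v,w) = ½ (v(η(w)) - w(η(v)) - η([v,w]))`. -/
def dEta (S : AlmostContactMetric C V) (v w : V) : C :=
  algebraMap ℝ C (1 / 2) *
    (S.act v (S.eta w) - S.act w (S.eta v) - S.eta (S.bracket v w))

/-- The tensor field `h = ½ 𝓛_ξ φ`. -/
def h (S : AlmostContactMetric C V) (v : V) : V :=
  algebraMap ℝ C (1 / 2) • (S.bracket S.xi (S.phi v) - S.phi (S.bracket S.xi v))

/-- The contact metric condition `dη = Φ`. -/
def IsContactMetric (S : AlmostContactMetric C V) : Prop :=
  ∀ v w : V, S.dEta v w = S.Phi2 v w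

/-- `ξ` is a Killing vector field: `𝓛_ξ g = 0`. -/
def KillingXi (S : AlmostContactMetric C V) : Prop :=
  ∀ v w : V, S.act S.xi (S.g v w) =
    S.g (S.bracket S.xi v) w + S.g v (S.bracket S.xi w)

/-- K-contact: `h = 0` (for a contact metric structure this is equivalent to
`ξ` being Killing). -/
def IsKContact (S : AlmostContactMetric C V) : Prop := ∀ v : V, S.h v = 0

/-- `D` is the Levi-Civita connection of `g`. -/
structure IsLeviCivita (S : AlmostContactMetric C V) (D : V → V → V) : Prop where
  add_left : ∀ u v w : V, D (u + v) w = D u w + D v w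
  smul_left : ∀ f : C, ∀ v w : V, D (f • v) w = f • D v w
  add_right : ∀ u v w : V, D u (v + w) = D u v + D u w
  leibniz : ∀ u : V, ∀ f : C, ∀ w : V, D u (f • w) = S.act u f • w + f • D u w
  torsion_free : ∀ v w : V, D v w - D w v = S.bracket v w
  metric : ∀ u v w : V, S.act u (S.g v w) = S.g (D u v) w + S.g v (D u w)

/-- The curvature tensor of a connection:
`R(u,v)w = D_u D_v w - D_v D_u w - D_[u,v] w`. -/
def curv (S : AlmostContactMetric C V) (D : V → V → V) (u v w : V) : V :=
  D u (D v w) - D v (D u w) - D (S.bracket u v) w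

/-- The `(κ,μ)`-nullity condition:
`R(v,w)ξ = κ(η(w)v - η(v)w) + μ(η(w)hv - η(v)hw)`. -/
def KappaMu (S : AlmostContactMetric C V) (D : V → V → V) (κ μ : ℝ) : Prop :=
  ∀ v w : V, S.curv D v w S.xi
    = algebraMap ℝ C κ • (S.eta w • v - S.eta v • w)
    + algebraMap ℝ C μ • (S.eta w • S.h v - S.eta v • S.h w)

/-- A Legendrian distribution: a subbundle of the contact distribution
`D = ker η` on whose sections `dη` vanishes. -/
structure IsLegendrian (S : AlmostContactMetric C V) (L : Submodule C V) : Prop where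
  horizontal : ∀ x ∈ L, S.eta x = 0
  isotropic : ∀ x ∈ L, ∀ y ∈ L, S.dEta x y = 0

/-- Involutivity (integrability) of a distribution: it is tangent to a
foliation. -/
def Involutive (S : AlmostContactMetric C V) (L : Submodule C V) : Prop :=
  ∀ x ∈ L, ∀ y ∈ L, S.bracket x y ∈ L

/-- The Pang invariant `Π(x,x') = -η([x',[x,ξ]])` of a Legendrian foliation. -/
def Pang (S : AlmostContactMetric C V) (x x' : V) : C :=
  - S.eta (S.bracket x' (S.bracket x S.xi))

/-- Flatness of a Legendrian foliation in Pang's classification: `Π ≡ 0`. -/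
def Flat (S : AlmostContactMetric C V) (L : Submodule C V) : Prop :=
  ∀ x ∈ L, ∀ x' ∈ L, S.Pang x x' = 0

/-- Non-degeneracy of a Legendrian foliation in Pang's classification:
the bilinear form `Π` has trivial kernel. -/
def Nondegenerate (S : AlmostContactMetric C V) (L : Submodule C V) : Prop :=
  ∀ x ∈ L, (∀ x' ∈ L, S.Pang x x' = 0) → x = 0

/-- Degeneracy of a Legendrian foliation in Pang's classification:
the bilinear form `Π` has a nontrivial kernel. -/
def Degenerate (S : AlmostContactMetric C V) (L : Submodule C V) : Prop :=
  ∃ x ∈ L, x ≠ 0 ∧ ∀ x' ∈ L, S.Pang x x' = 0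

/-- `L` is the eigendistribution of `h` inside the contact distribution
`ker η` for the eigenvalue `lam`. -/
def IsEigenDistrib (S : AlmostContactMetric C V) (lam : ℝ) (L : Submodule C V) : Prop :=
  ∀ v : V, v ∈ L ↔ (S.eta v = 0 ∧ S.h v = algebraMap ℝ C lam • v)

/-- An orthogonal bi-Legendrian structure: a pair of mutually orthogonal,
conjugate (`Q = φ L`), complementary Legendrian distributions, together with
the projections of `TM = L ⊕ Q ⊕ ℝξ` onto `L` and onto `Q`. -/
structure OrthBiLegendrian (S : AlmostContactMetric C V) where
  L : Submodule C V
  Q : Submodule C V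
  legL : S.IsLegendrian L
  legQ : S.IsLegendrian Q
  orth : ∀ x ∈ L, ∀ y ∈ Q, S.g x y = 0
  conjLQ : ∀ x ∈ L, S.phi x ∈ Q
  conjQL : ∀ y ∈ Q, S.phi y ∈ L
  pL : V → V
  pQ : V → V
  pL_mem : ∀ v : V, pL v ∈ L
  pQ_mem : ∀ v : V, pQ v ∈ Q
  decomp : ∀ v : V, v = pL v + pQ v + S.eta v • S.xi
  pL_add : ∀ v w : V, pL (v + w) = pL v + pL w
  pL_smul : ∀ f : C, ∀ v : V, pL (f • v) = f • pL v
  pQ_add : ∀ v w : V, pQ (v + w) = pQ v + pQ w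
  pQ_smul : ∀ f : C, ∀ v : V, pQ (f • v) = f • pQ v
  pL_of_memL : ∀ x ∈ L, pL x = x
  pL_of_memQ : ∀ y ∈ Q, pL y = 0
  pL_xi : pL S.xi = 0
  pQ_of_memQ : ∀ y ∈ Q, pQ y = y
  pQ_of_memL : ∀ x ∈ L, pQ x = 0
  pQ_xi : pQ S.xi = 0

/-- Both distributions of the bi-Legendrian structure are integrable, i.e. the
pair is a pair of (mutually orthogonal) Legendrian foliations. -/
def OrthBiLegendrian.IsFoliated {S : AlmostContactMetric C V}
    (B : S.OrthBiLegendrian) : Prop :=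
  S.Involutive B.L ∧ S.Involutive B.Q

/-- `D` is the bi-Legendrian connection associated with the pair `(L, Q)`:
the unique linear connection preserving `L`, `Q` and `ℝξ`, parallelizing `dη`,
whose torsion satisfies `T(x,y) = 2 dη(x,y) ξ` for `x ∈ Γ(L)`, `y ∈ Γ(Q)` and
`T(v,ξ) = [ξ, v_L]_Q + [ξ, v_Q]_L`. -/
structure IsBiLegendrianConn (S : AlmostContactMetric C V)
    (B : S.OrthBiLegendrian) (D : V → V → V) : Prop where
  add_left : ∀ u v w : V, D (u + v) w = D u w + D v w
  smul_left : ∀ f : C, ∀ v w : V, D (f • v) w = f • D v w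
  add_right : ∀ u v w : V, D u (v + w) = D u v + D u w
  leibniz : ∀ u : V, ∀ f : C, ∀ w : V, D u (f • w) = S.act u f • w + f • D u w
  preserves_L : ∀ v : V, ∀ x ∈ B.L, D v x ∈ B.L
  preserves_Q : ∀ v : V, ∀ y ∈ B.Q, D v y ∈ B.Q
  preserves_xi : ∀ v : V, ∃ f : C, D v S.xi = f • S.xi
  parallel_dEta : ∀ u v w : V,
    S.act u (S.dEta v w) = S.dEta (D u v) w + S.dEta v (D u w)
  torsion_mixed : ∀ x ∈ B.L, ∀ y ∈ B.Q,
    D x y - D y x - S.bracket x y = (2 * S.dEta x y) • S.xi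
  torsion_xi : ∀ v : V, D v S.xi - D S.xi v - S.bracket v S.xi
    = B.pQ (S.bracket S.xi (B.pL v)) + B.pL (S.bracket S.xi (B.pQ v))

/-- `D φ = 0`. -/
def ParallelPhi (S : AlmostContactMetric C V) (D : V → V → V) : Prop :=
  ∀ v w : V, D v (S.phi w) = S.phi (D v w)

/-- `D h = 0`. -/
def ParallelH (S : AlmostContactMetric C V) (D : V → V → V) : Prop :=
  ∀ v w : V, D v (S.h w) = S.h (D v w)

/-- `D g = 0`. -/
def ParallelG (S : AlmostContactMetric C V) (D : V → V → V) : Prop :=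
  ∀ u v w : V, S.act u (S.g v w) = S.g (D u v) w + S.g v (D u w)

/-- `D η = 0`. -/
def ParallelEta (S : AlmostContactMetric C V) (D : V → V → V) : Prop :=
  ∀ v w : V, S.act v (S.eta w) = S.eta (D v w)

end AlmostContactMetric

open AlmostContactMetric

variable {C : Type u} {V : Type v} [CommRing C] [Algebra ℝ C]
  [AddCommGroup V] [Module C V]

namespace AlmostContactMetric

section Helpers

variable {S : AlmostContactMetric C V}

/-! ### Elementary algebra -/

lemma two_mul_half : (2 : C) * algebraMap ℝ C (1 / 2) = 1 := by
  rw [← map_ofNat (algebraMap ℝ C) 2, ← map_mul]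
  norm_num

lemma eq_of_two_mul {a b : C} (hab : 2 * a = 2 * b) : a = b := by
  linear_combination (algebraMap ℝ C (1 / 2)) * hab + (b - a) * two_mul_half (C := C)

lemma phi_zero : S.phi 0 = 0 := by
  simpa using S.phi_smul 0 0

lemma phi_neg (v : V) : S.phi (-v) = -S.phi v := by
  simpa using S.phi_smul (-1) v

lemma g_neg_left (v w : V) : S.g (-v) w = -S.g v w := by
  simpa using S.g_smul_left (-1) v w

lemma g_sub_left (u v w : V) : S.g (u - v) w = S.g u w - S.g v w := by
  rw [sub_eq_add_neg, S.g_add_left, g_neg_left, sub_eq_add_neg]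

lemma g_add_right (u v w : V) : S.g u (v + w) = S.g u v + S.g u w := by
  rw [S.g_symm, S.g_add_left, S.g_symm v, S.g_symm w]

lemma g_smul_right (f : C) (v w : V) : S.g v (f • w) = f * S.g v w := by
  rw [S.g_symm, S.g_smul_left, S.g_symm w]

lemma g_neg_right (v w : V) : S.g v (-w) = -S.g v w := by
  rw [S.g_symm, g_neg_left, S.g_symm w]

lemma g_sub_right (u v w : V) : S.g u (v - w) = S.g u v - S.g u w := by
  rw [S.g_symm, g_sub_left, S.g_symm v, S.g_symm w]

lemma act_zero (u : V) : S.act u 0 = 0 := by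
  simpa using S.act_algebraMap u 0

lemma act_one (u : V) : S.act u 1 = 0 := by
  simpa using S.act_algebraMap u 1

lemma act_neg (u : V) (f : C) : S.act u (-f) = -S.act u f := by
  have := S.act_add u f (-f)
  rw [add_neg_cancel, act_zero] at this
  linear_combination -this

lemma act_sub (u : V) (f f' : C) : S.act u (f - f') = S.act u f - S.act u f' := by
  rw [sub_eq_add_neg, S.act_add, act_neg, sub_eq_add_neg]

lemma act_const_mul (u : V) (r : ℝ) (f : C) :
    S.act u (algebraMap ℝ C r * f) = algebraMap ℝ C r * S.act u f := by
  rw [S.act_mul, S.act_algebraMap, zero_mul, zero_add]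

lemma eta_neg (v : V) : S.eta (-v) = -S.eta v := by
  simpa using S.eta_smul (-1) v

lemma bracket_add_right (u v w : V) :
    S.bracket u (v + w) = S.bracket u v + S.bracket u w := by
  rw [S.bracket_antisymm, S.bracket_add_left, S.bracket_antisymm v, S.bracket_antisymm w]
  abel

lemma bracket_neg_right (u v : V) : S.bracket u (-v) = -S.bracket u v := by
  have := S.bracket_leibniz u (-1) v
  rw [act_neg, act_one] at this
  simpa using this

lemma h_add (u w : V) : S.h (u + w) = S.h u + S.h w := by
  simp only [h, S.phi_add, bracket_add_right]
  rw [← smul_add]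
  congr 1
  abel

lemma eta_bracket_self (v : V) : S.eta (S.bracket v v) = 0 := by
  have h1 := congrArg S.eta (S.bracket_antisymm v v)
  rw [eta_neg] at h1
  exact eq_of_two_mul (by linear_combination h1)

lemma two_smul_h (v : V) :
    (2 : C) • S.h v = S.bracket S.xi (S.phi v) - S.phi (S.bracket S.xi v) := by
  rw [h, smul_smul, two_mul_half, one_smul]

lemma two_dEta (v w : V) :
    2 * S.dEta v w = S.act v (S.eta w) - S.act w (S.eta v) - S.eta (S.bracket v w) := by
  rw [dEta, ← mul_assoc, two_mul_half, one_mul]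

lemma dEta_antisymm (v w : V) : S.dEta v w = -S.dEta w v := by
  have h1 := two_dEta (S := S) v w
  have h2 := two_dEta (S := S) w v
  rw [S.bracket_antisymm, eta_neg] at h1
  exact eq_of_two_mul (by linear_combination h1 + h2)

/-! ### The Reeb field -/

/-- The contact condition forces `η(φ ξ) = 0`, and `φ³ = -φ + (η ∘ φ) ξ` shows that `φ ξ` is a
multiple of `ξ`. -/
lemma phi_xi (hS : S.IsContactMetric) : S.phi S.xi = 0 := by
  have h1 : S.phi (S.phi S.xi) = 0 := by
    rw [S.phi_sq, S.eta_xi, one_smul, neg_add_cancel]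
  have h2 : S.eta (S.phi S.xi) = 0 := by
    rw [S.eta_eq_g_xi, S.g_symm]
    have h3 := hS S.xi S.xi
    have h4 := two_dEta (S := S) S.xi S.xi
    rw [eta_bracket_self, sub_self, sub_zero, h3] at h4
    exact eq_of_two_mul (by simpa [Phi2] using h4)
  have h3 := S.phi_sq (S.phi S.xi)
  rw [h1, phi_zero, h2, zero_smul, add_zero] at h3
  exact neg_eq_zero.mp h3.symm

lemma dEta_xi_right (hS : S.IsContactMetric) (v : V) : S.dEta v S.xi = 0 := by
  rw [hS, Phi2, phi_xi hS]
  simpa using g_smul_right (S := S) 0 v 0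

lemma eta_phi (hS : S.IsContactMetric) (v : V) : S.eta (S.phi v) = 0 := by
  rw [S.eta_eq_g_xi, S.g_symm]
  change S.Phi2 S.xi v = 0
  rw [← hS, dEta_antisymm, dEta_xi_right hS, neg_zero]

lemma g_phi (hS : S.IsContactMetric) (v w : V) : S.g (S.phi v) w = -S.g v (S.phi w) := by
  rw [S.g_symm]
  change S.Phi2 w v = -S.Phi2 v w
  rw [← hS, ← hS, dEta_antisymm]

/-- `𝓛_ξ η = 0`. -/
lemma eta_bracket_xi (hS : S.IsContactMetric) (v : V) :
    S.eta (S.bracket S.xi v) = S.act S.xi (S.eta v) := by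
  have h1 := two_dEta (S := S) v S.xi
  rw [dEta_xi_right hS, S.eta_xi, act_one, S.bracket_antisymm, eta_neg] at h1
  linear_combination -h1

/-- `𝓛_ξ dη = 0`, a consequence of `𝓛_ξ η = 0` and the Jacobi identity. -/
lemma lie_xi_dEta (hS : S.IsContactMetric) (u w : V) :
    S.act S.xi (S.dEta u w) =
      S.dEta (S.bracket S.xi u) w + S.dEta u (S.bracket S.xi w) := by
  have h0 : 2 * S.act S.xi (S.dEta u w) = S.act S.xi (2 * S.dEta u w) := by
    rw [two_mul, two_mul, S.act_add]
  have hj := congrArg S.eta (S.bracket_jacobi S.xi u w)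
  rw [S.eta_add, S.eta_add, eta_bracket_xi hS, S.bracket_antisymm w S.xi,
    S.bracket_antisymm w (S.bracket S.xi u)] at hj
  have hz : S.eta 0 = 0 := by simpa using S.eta_smul 0 0
  rw [bracket_neg_right, eta_neg, eta_neg, hz] at hj
  apply eq_of_two_mul
  rw [h0, mul_add, two_dEta, two_dEta, two_dEta, act_sub, act_sub, eta_bracket_xi hS,
    eta_bracket_xi hS, S.bracket_act, S.bracket_act]
  linear_combination -hj

/-! ### Covariant derivative of the Reeb field -/

/-- The skew part of `∇ξ` is `dη`. -/
lemma nabla_xi_skew (hS : S.IsContactMetric) {D : V → V → V} (hD : S.IsLeviCivita D) (u w : V) :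
    S.g (D u S.xi) w - S.g (D w S.xi) u = 2 * S.g u (S.phi w) := by
  have h1 := hD.metric u S.xi w
  have h2 := hD.metric w S.xi u
  have h3 := two_dEta (S := S) u w
  rw [hS, Phi2, ← hD.torsion_free u w, S.eta_eq_g_xi w, S.eta_eq_g_xi u,
    S.eta_eq_g_xi (D u w - D w u), g_sub_left, S.g_symm w, S.g_symm u S.xi,
    S.g_symm (D u w), S.g_symm (D w u)] at h3
  linear_combination -h1 + h2 - h3

/-- The covariant derivative of the Reeb field, `∇_u ξ = -φ u + h φ u`, tested against `w` with
`h ∘ φ` moved to the second slot. -/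
lemma g_nabla_xi_right (hS : S.IsContactMetric) {D : V → V → V} (hD : S.IsLeviCivita D)
    (u w : V) : S.g (D u S.xi) w = S.g u (S.phi w) + S.g u (S.h (S.phi w)) := by
  -- The symmetric part of `∇ξ` is half of `𝓛_ξ g`.
  have hsymm : ∀ w, S.g (D u S.xi) w + S.g (D w S.xi) u =
      S.act S.xi (S.g u w) - S.g (S.bracket S.xi u) w - S.g u (S.bracket S.xi w) := by
    intro w
    rw [hD.metric, ← hD.torsion_free, ← hD.torsion_free, g_sub_left, g_sub_right,
      S.g_symm u (D w S.xi)]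
    ring
  have hlie : ∀ w, S.act S.xi (S.g u (S.phi w)) - S.g (S.bracket S.xi u) (S.phi w)
      - S.g u (S.bracket S.xi (S.phi w)) = -(2 * S.g u (S.h w)) := by
    intro w
    have h1 := lie_xi_dEta hS u w
    rw [hS, hS, hS, Phi2, Phi2, Phi2] at h1
    have h2 := congrArg (S.g u) (two_smul_h (S := S) w)
    rw [g_smul_right, g_sub_right] at h2
    linear_combination h1 + h2
  -- Write the test field as `w = -φ (φ w) + η w • ξ`.
  have hw : S.act S.xi (S.g u w) - S.g (S.bracket S.xi u) w - S.g u (S.bracket S.xi w)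
      = 2 * S.g u (S.h (S.phi w)) := by
    have h1 := hlie (S.phi w)
    have h2 := eta_bracket_xi hS u
    rw [S.phi_sq, g_add_right, g_add_right, bracket_add_right, g_add_right,
      S.bracket_leibniz, g_add_right, g_smul_right, g_smul_right, g_smul_right, g_smul_right,
      g_neg_right, g_neg_right, S.act_add, act_neg, S.act_mul] at h1
    have h4 : S.g u (S.bracket S.xi S.xi) = 0 := by
      have h5 := congrArg (S.g u) (S.bracket_antisymm S.xi S.xi)
      rw [g_neg_right] at h5
      exact eq_of_two_mul (by linear_combination h5)
    rw [bracket_neg_right, g_neg_right, h4] at h1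
    rw [S.eta_eq_g_xi (S.bracket S.xi u), S.eta_eq_g_xi u] at h2
    linear_combination -h1 - S.eta w * h2
  exact eq_of_two_mul (by linear_combination nabla_xi_skew hS hD u w + hsymm w + hw)

/-- `h φ` is `g`-self-adjoint because `2 g(·, h φ ·) = 𝓛_ξ g`; so `∇_u ξ = -φ u + h φ u`. -/
lemma g_nabla_xi (hS : S.IsContactMetric) {D : V → V → V} (hD : S.IsLeviCivita D)
    (u w : V) : S.g (D u S.xi) w = -S.g (S.phi u) w + S.g (S.h (S.phi u)) w := by
  have h1 := g_nabla_xi_right hS hD u w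
  have h2 := g_nabla_xi_right hS hD w u
  have h3 := nabla_xi_skew hS hD u w
  have h4 := g_phi hS u w
  rw [S.g_symm w, S.g_symm w (S.h (S.phi u))] at h2
  linear_combination h3 + h2 + h4 + h4

/-- `∇_ξ ξ = 0`. -/
lemma g_nabla_xi_xi (hS : S.IsContactMetric) {D : V → V → V} (hD : S.IsLeviCivita D)
    (w : V) : S.g (D S.xi S.xi) w = 0 := by
  have h1 := hD.metric S.xi S.xi w
  have h2 := hD.metric w S.xi S.xi
  have h3 := eta_bracket_xi hS w
  rw [← hD.torsion_free, S.eta_eq_g_xi, S.eta_eq_g_xi w, g_sub_left, S.g_symm w,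
    S.g_symm (D S.xi w)] at h3
  rw [← S.eta_eq_g_xi S.xi, S.eta_xi, act_one, S.g_symm S.xi] at h2
  have h4 : S.g (D w S.xi) S.xi = 0 := eq_of_two_mul (by linear_combination -h2)
  linear_combination -h1 - h3 - h4

/-! ### The Pang invariant -/

/-- On the contact distribution `[x, ξ]` is horizontal and `Π(x, x') = 2 dη(x', [x, ξ])`. -/
lemma pang_eq (hS : S.IsContactMetric) {x x' : V} (hx : S.eta x = 0) (hx' : S.eta x' = 0) :
    S.Pang x x' = 2 * S.g x' (S.phi (S.bracket x S.xi)) := by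
  have h1 : S.eta (S.bracket x S.xi) = 0 := by
    rw [S.bracket_antisymm, eta_neg, eta_bracket_xi hS, hx, act_zero, neg_zero]
  have h2 := two_dEta (S := S) x' (S.bracket x S.xi)
  rw [h1, hx', act_zero, act_zero, hS, Phi2] at h2
  rw [Pang]
  linear_combination -h2

/-- The formula for the Pang invariant on the eigendistribution of `ε`. Here `a` and `b` are the
components of `[x, ξ]` along the eigendistributions of `ε` and `-ε`. -/
lemma eps_mul_pang (hS : S.IsContactMetric) {D : V → V → V} (hD : S.IsLeviCivita D)
    {κ μ : ℝ} (hkm : S.KappaMu D κ μ) (ε : ℝ) {x x' a b : V}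
    (hx : S.eta x = 0) (hx' : S.eta x' = 0)
    (hhx : S.h x = algebraMap ℝ C ε • x)
    (hhy : S.h (S.phi x) = -algebraMap ℝ C ε • S.phi x)
    (hab : S.bracket x S.xi = a + b)
    (hha : S.h (S.phi a) = -algebraMap ℝ C ε • S.phi a)
    (hhb : S.h (S.phi b) = algebraMap ℝ C ε • S.phi b)
    (horth : S.g x' (S.phi a) = 0) :
    algebraMap ℝ C ε * S.Pang x x' =
      algebraMap ℝ C ((1 + ε) ^ 2 - κ - μ * ε) * S.g x x' := by
  have hphi2 : S.phi (S.phi x) = -x := by rw [S.phi_sq, hx, zero_smul, add_zero]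
  have hpang := pang_eq hS hx hx'
  rw [hab, S.phi_add, g_add_right, horth, zero_add] at hpang
  -- `∇_x ξ = -(1 + ε) φ x`
  have hDx : ∀ w, S.g (D x S.xi) w =
      algebraMap ℝ C (-(1 + ε)) * S.g (S.phi x) w := by
    intro w
    rw [g_nabla_xi hS hD, hhy, S.g_smul_left]
    simp only [map_neg, map_add, map_one]
    ring
  -- `∇_ξ φ x = (1 + ε) x - φ [x, ξ]`
  have hDy : S.g (D S.xi (S.phi x)) x' =
      (1 + algebraMap ℝ C ε) * S.g x x' - S.g x' (S.phi b) := by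
    have h1 : D S.xi (S.phi x) = S.bracket S.xi (S.phi x) + D (S.phi x) S.xi := by
      rw [← hD.torsion_free]; abel
    have h2 : S.bracket S.xi (S.phi x) = (2 : C) • S.h x - S.phi (a + b) := by
      rw [two_smul_h, ← hab, S.bracket_antisymm x, phi_neg]; abel
    have h3 : S.h (-x) = -S.h x := by
      rw [h, h, phi_neg]
      rw [bracket_neg_right, bracket_neg_right, phi_neg, ← smul_neg]
      congr 1
      abel
    rw [h1, S.g_add_left, g_nabla_xi hS hD, h2, hphi2, h3, hhx, S.phi_add, g_sub_left,
      S.g_add_left (S.phi a), S.g_symm (S.phi a), horth, S.g_symm (S.phi b), g_neg_left,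
      g_neg_left, S.g_smul_left, S.g_smul_left]
    ring
  -- `∇_{[x, ξ]} ξ = -(1 + ε) φ a - (1 - ε) φ b`
  have hDw : S.g (D (S.bracket x S.xi) S.xi) x' =
      -((1 - algebraMap ℝ C ε) * S.g x' (S.phi b)) := by
    rw [g_nabla_xi hS hD, hab, S.phi_add, h_add, hha, hhb, S.g_add_left, S.g_add_left,
      S.g_smul_left, S.g_smul_left, S.g_symm (S.phi a), S.g_symm (S.phi b), horth]
    ring
  have hR1 : S.g (D x (D S.xi S.xi)) x' = 0 := by
    have h1 := hD.metric x (D S.xi S.xi) x'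
    rw [g_nabla_xi_xi hS hD, g_nabla_xi_xi hS hD, act_zero] at h1
    linear_combination -h1
  have hR2 : S.g (D S.xi (D x S.xi)) x' =
      algebraMap ℝ C (-(1 + ε)) * S.g (D S.xi (S.phi x)) x' := by
    have h1 := hD.metric S.xi (D x S.xi) x'
    have h2 := hD.metric S.xi (S.phi x) x'
    rw [hDx, hDx, act_const_mul] at h1
    linear_combination -h1 + algebraMap ℝ C (-(1 + ε)) * h2
  have hR := congrArg (fun v => S.g v x') (hkm x S.xi)
  simp only [curv, S.eta_xi, hx, one_smul, zero_smul, sub_zero, hhx, g_sub_left, S.g_add_left,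
    S.g_smul_left] at hR
  rw [hR1, hR2, hDy, hDw] at hR
  rw [hpang]
  simp only [map_sub, map_neg, map_add, map_one, map_mul, map_pow] at hR ⊢
  linear_combination -hR

end Helpers

end AlmostContactMetric

/-- Proposition 3.3: on a non-K-contact contact metric
`(κ,μ)`-space, with `λ = √(1-κ)`, the Pang invariants of the eigen-foliations
`F_λ = B.L` and `F_{-λ} = B.Q` of `h` are
`Π_{F_λ} = (((λ+1)² - κ - μλ)/λ) · g|_{F_λ×F_λ}` and
`Π_{F_{-λ}} = ((-(λ-1)² + κ - μλ)/λ) · g|_{F_{-λ}×F_{-λ}}`. -/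
theorem pang_invariant_formulas
    (S : AlmostContactMetric C V) (hS : S.IsContactMetric)
    (Dlc : V → V → V) (hlc : S.IsLeviCivita Dlc)
    (κ μ : ℝ) (hkm : S.KappaMu Dlc κ μ) (hnK : ¬ S.IsKContact)
    (B : S.OrthBiLegendrian) (hB : B.IsFoliated)
    (hL : S.IsEigenDistrib (Real.sqrt (1 - κ)) B.L)
    (hQ : S.IsEigenDistrib (-Real.sqrt (1 - κ)) B.Q) :
    (∀ x ∈ B.L, ∀ x' ∈ B.L,
      S.Pang x x' =
        algebraMap ℝ C
          (((Real.sqrt (1 - κ) + 1) ^ 2 - κ - μ * Real.sqrt (1 - κ)) /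
            Real.sqrt (1 - κ)) * S.g x x') ∧
    (∀ y ∈ B.Q, ∀ y' ∈ B.Q,
      S.Pang y y' =
        algebraMap ℝ C
          ((-(Real.sqrt (1 - κ) - 1) ^ 2 + κ - μ * Real.sqrt (1 - κ)) /
            Real.sqrt (1 - κ)) * S.g y y') := by
  set l := Real.sqrt (1 - κ) with hl
  have hl0 : l ≠ 0 := by
    intro h0
    apply hnK
    intro v
    -- All three components of `v` are annihilated by `h` when `l = 0`.
    have hLz : S.h (B.pL v) = 0 := by
      rw [((hL _).1 (B.pL_mem v)).2, h0, map_zero, zero_smul]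
    have hQz : S.h (B.pQ v) = 0 := by
      rw [((hQ _).1 (B.pQ_mem v)).2, h0, neg_zero, map_zero, zero_smul]
    have hξ : S.h (S.eta v • S.xi) = 0 := by
      have h2 : S.bracket S.xi (0 : V) = 0 := by
        simpa [act_zero] using S.bracket_leibniz S.xi 0 0
      have hbb : S.phi (S.bracket S.xi S.xi) = 0 := by
        have h3 := congrArg (fun w => algebraMap ℝ C (1 / 2) • S.phi w)
          (S.bracket_antisymm S.xi S.xi)
        simp only [phi_neg, smul_neg] at h3
        have h4 := two_mul_half (C := C)
        rw [← one_smul C (S.phi _), ← h4, two_mul, add_smul]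
        nth_rewrite 1 [h3]
        exact neg_add_cancel _
      rw [h, S.phi_smul, phi_xi hS, smul_zero, h2, S.bracket_leibniz, S.phi_add, S.phi_smul,
        S.phi_smul, phi_xi hS, hbb]
      simp
    rw [B.decomp v, h_add, h_add, hLz, hQz, hξ, add_zero, add_zero]
  have hw0 : ∀ x, S.eta x = 0 →
      S.bracket x S.xi = B.pL (S.bracket x S.xi) + B.pQ (S.bracket x S.xi) := by
    intro x hx
    have h1 := B.decomp (S.bracket x S.xi)
    rwa [S.bracket_antisymm x S.xi, eta_neg, eta_bracket_xi hS, hx, act_zero, neg_zero,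
      zero_smul, add_zero, ← S.bracket_antisymm x S.xi] at h1
  have eigL : ∀ x ∈ B.L, S.h x = algebraMap ℝ C l • x := fun x hx => ((hL x).1 hx).2
  have eigQ : ∀ x ∈ B.Q, S.h x = -algebraMap ℝ C l • x := fun x hx => by
    rw [((hQ x).1 hx).2, map_neg]
  constructor
  · intro x hx x' hx'
    have key := eps_mul_pang hS hlc hkm l (x := x) (x' := x')
      (B.legL.horizontal x hx) (B.legL.horizontal x' hx') (eigL x hx)
      (eigQ _ (B.conjLQ x hx)) (hw0 x (B.legL.horizontal x hx))
      (eigQ _ (B.conjLQ _ (B.pL_mem _))) (eigL _ (B.conjQL _ (B.pQ_mem _)))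
      (B.orth _ hx' _ (B.conjLQ _ (B.pL_mem _)))
    have h1 : algebraMap ℝ C l⁻¹ * algebraMap ℝ C l = 1 := by
      rw [← map_mul, inv_mul_cancel₀ hl0, map_one]
    rw [← one_mul (S.Pang x x'), ← h1, mul_assoc, key, ← mul_assoc, ← map_mul]
    congr 2
    field_simp
    ring
  · intro y hy y' hy'
    have key := eps_mul_pang hS hlc hkm (-l) (x := y) (x' := y')
      (B.legQ.horizontal y hy) (B.legQ.horizontal y' hy')
      ((hQ y).1 hy).2
      (by rw [map_neg, neg_neg]; exact eigL _ (B.conjQL y hy))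
      (by rw [add_comm]; exact hw0 y (B.legQ.horizontal y hy))
      (by rw [map_neg, neg_neg]; exact eigL _ (B.conjQL _ (B.pQ_mem _)))
      (by rw [map_neg]; exact eigQ _ (B.conjLQ _ (B.pL_mem _)))
      (by rw [S.g_symm]; exact B.orth _ (B.conjQL _ (B.pQ_mem _)) _ hy')
    have h1 : algebraMap ℝ C (-l)⁻¹ * algebraMap ℝ C (-l) = 1 := by
      rw [← map_mul, inv_mul_cancel₀ (neg_ne_zero.2 hl0), map_one]
    rw [← one_mul (S.Pang y y'), ← h1, mul_assoc, key, ← mul_assoc, ← map_mul]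
    congr 2
    field_simp
    ring
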